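/- arXiv:0803.1339 — 2 statements merged into one kernel-verified Lean document; each statement's English description precedes it below -/
import Mathlib

section
/- Let Φ(u) be the 2n×2n matrix over End(P) with block form Φ(u) = [[u·1_n, D·J_n], [−J_n·M, −u·1_n]] (scalars acting as scalar endomorphisms). For g ∈ GL_n(ℂ), let Ad_{π(g)}(Φ(u)) denote the 2n×2n matrix whose (i,j)-entry is π(g) ∘ Φ(u)_{i,j} ∘ π(g)⁻¹. Then for every g ∈ GL_n(ℂ) and u ∈ ℂ, Ad_{π(g)}(Φ(u)) = ι(ᵗg) · Φ(u) · ι(ᵗg)⁻¹, where ι(h) := diag(h, J_n (ᵗh)⁻¹ J_n) ∈ GL_{2n}(ℂ) (so ι(ᵗg) = diag(ᵗg, J_n g⁻¹ J_n)), and the products on the right are matrix products in which entries of complex matrices act on End(P) by scalar multiplication. -/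
open Matrix MvPolynomial

noncomputable section

/-- Index set for entries `x_{i,j}` with `i < j`. -/
abbrev Idx (n : ℕ) := {p : Fin n × Fin n // p.1 < p.2}

/-- Polynomial algebra on the space of alternating `n × n` matrices. -/
abbrev P (n : ℕ) := MvPolynomial (Idx n) ℂ

/-- Multiplication operator `M_{i,j}` (with `M_{j,i} = -M_{i,j}`, `M_{i,i} = 0`). -/
def Mop (n : ℕ) (i j : Fin n) : Module.End ℂ (P n) :=
  if h : i < j then LinearMap.mulLeft ℂ (X ⟨(i, j), h⟩)
  else if h' : j < i then -LinearMap.mulLeft ℂ (X ⟨(j, i), h'⟩ : P n)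
  else 0

/-- Derivation `D_{i,j} = ∂/∂x_{i,j}` (with `D_{j,i} = -D_{i,j}`, `D_{i,i} = 0`). -/
def Dop (n : ℕ) (i j : Fin n) : Module.End ℂ (P n) :=
  if h : i < j then ((pderiv ⟨(i, j), h⟩ : Derivation ℂ (P n) (P n)) : P n →ₗ[ℂ] P n)
  else if h' : j < i then -((pderiv ⟨(j, i), h'⟩ : Derivation ℂ (P n) (P n)) : P n →ₗ[ℂ] P n)
  else 0

/-- The generic alternating matrix with entries in `P n`. -/
def genMat (n : ℕ) : Matrix (Fin n) (Fin n) (P n) := Matrix.of fun i j =>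
  if h : i < j then X ⟨(i, j), h⟩
  else if h' : j < i then -X ⟨(j, i), h'⟩
  else 0

/-- The representation `π(g)` of `GL n ℂ` on `P n`, sending `x_{i,j}` to the
`(i,j)`-entry of `g⁻¹ x ᵗ(g⁻¹)`. -/
def piHom (n : ℕ) (g : GL (Fin n) ℂ) : P n →ₐ[ℂ] P n :=
  aeval fun v : Idx n =>
    ((((g⁻¹ : GL (Fin n) ℂ) : Matrix (Fin n) (Fin n) ℂ).map (algebraMap ℂ (P n)) * genMat n *
      (((g⁻¹ : GL (Fin n) ℂ) : Matrix (Fin n) (Fin n) ℂ).map (algebraMap ℂ (P n)))ᵀ))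
      v.1.1 v.1.2

/-- The matrix `J_n` with 1's on the anti-diagonal. -/
def Jmat (A : Type*) [Zero A] [One A] (n : ℕ) : Matrix (Fin n) (Fin n) A :=
  Matrix.of fun i j => if (i : ℕ) + (j : ℕ) = n - 1 then 1 else 0

/-- The matrix `Φ(u) = [[u·1_n, D·J_n], [−J_n·M, −u·1_n]]` over `End(P)`. -/
def Phi (n : ℕ) (u : ℂ) : Matrix (Fin n ⊕ Fin n) (Fin n ⊕ Fin n) (Module.End ℂ (P n)) :=
  Matrix.fromBlocks (u • 1) ((Matrix.of fun i j => Dop n i j) * Jmat (Module.End ℂ (P n)) n)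
    (-(Jmat (Module.End ℂ (P n)) n * Matrix.of fun i j => Mop n i j)) (-(u • 1))

/-- The embedding `ι(h) = diag(h, J_n (ᵗh)⁻¹ J_n)`. -/
def iota (n : ℕ) (h : Matrix (Fin n) (Fin n) ℂ) :
    Matrix (Fin n ⊕ Fin n) (Fin n ⊕ Fin n) ℂ :=
  Matrix.fromBlocks h 0 0 (Jmat ℂ n * (hᵀ)⁻¹ * Jmat ℂ n)

lemma Mop_eq (n : ℕ) (i j : Fin n) : Mop n i j = LinearMap.mulLeft ℂ (genMat n i j) := by
  unfold Mop genMat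
  simp only [Matrix.of_apply]
  split_ifs
  · rfl
  · ext; simp
  · ext; simp

lemma genMat_transpose (n : ℕ) : (genMat n)ᵀ = - genMat n := by
  ext1 i j
  simp only [genMat, Matrix.transpose_apply, Matrix.of_apply, Matrix.neg_apply]
  split_ifs with h1 h2
  · exact absurd h1 (lt_asymm h2)
  all_goals simp

lemma genMat_diag (n : ℕ) (i : Fin n) : genMat n i i = 0 := by
  simp [genMat]

lemma conj_alt {R : Type*} [CommRing R] [IsAddTorsionFree R] {n : ℕ}
    (A S : Matrix (Fin n) (Fin n) R) (hS : Sᵀ = -S) :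
    (A * S * Aᵀ)ᵀ = - (A * S * Aᵀ) := by
  simp [Matrix.transpose_mul, hS, Matrix.mul_assoc]

lemma piHom_genMat (n : ℕ) (g : GL (Fin n) ℂ) (i j : Fin n) :
    piHom n g (genMat n i j) =
      ((((g⁻¹ : GL (Fin n) ℂ) : Matrix (Fin n) (Fin n) ℂ).map (algebraMap ℂ (P n)) * genMat n *
      (((g⁻¹ : GL (Fin n) ℂ) : Matrix (Fin n) (Fin n) ℂ).map (algebraMap ℂ (P n)))ᵀ)) i j := by
  have hT := conj_alt (((g⁻¹ : GL (Fin n) ℂ) : Matrix (Fin n) (Fin n) ℂ).map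
    (algebraMap ℂ (P n))) (genMat n) (genMat_transpose n)
  rcases lt_trichotomy i j with h | h | h
  · have : genMat n i j = X ⟨(i, j), h⟩ := by simp [genMat, h]
    rw [this, piHom, aeval_X]
  · subst h
    rw [genMat_diag, map_zero]
    have := congrFun (congrFun hT i) i
    rw [Matrix.transpose_apply, Matrix.neg_apply] at this
    exact (self_eq_neg.mp this).symm
  · have : genMat n i j = -X ⟨(j, i), h⟩ := by simp [genMat, h, lt_asymm h]
    rw [this, map_neg, piHom, aeval_X]
    have := congrFun (congrFun hT i) j
    rw [Matrix.transpose_apply, Matrix.neg_apply] at this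
    rw [this, neg_neg]

lemma piHom_map_genMat (n : ℕ) (g : GL (Fin n) ℂ) :
    (genMat n).map (piHom n g) =
      (((g⁻¹ : GL (Fin n) ℂ) : Matrix (Fin n) (Fin n) ℂ).map (algebraMap ℂ (P n)) * genMat n *
      (((g⁻¹ : GL (Fin n) ℂ) : Matrix (Fin n) (Fin n) ℂ).map (algebraMap ℂ (P n)))ᵀ) := by
  ext1 i j
  exact piHom_genMat n g i j

lemma map_alg_map (n : ℕ) (f : P n →ₐ[ℂ] P n) (A : Matrix (Fin n) (Fin n) ℂ) :
    (A.map (algebraMap ℂ (P n))).map f = A.map (algebraMap ℂ (P n)) := by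
  ext1 i j
  simp

lemma conj_cancel {R : Type*} [CommRing R] {n : ℕ} (A B S : Matrix (Fin n) (Fin n) R)
    (e : A * B = 1) : A * (B * S * Bᵀ) * Aᵀ = S := by
  calc A * (B * S * Bᵀ) * Aᵀ = (A * B) * S * (A * B)ᵀ := by
        simp only [Matrix.transpose_mul, Matrix.mul_assoc]
    _ = S := by simp [e]

lemma piHom_comp_inv (n : ℕ) (g : GL (Fin n) ℂ) :
    (piHom n g).comp (piHom n g⁻¹) = AlgHom.id ℂ (P n) := by
  apply MvPolynomial.algHom_ext
  rintro ⟨⟨i, j⟩, h⟩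
  have hX : (X ⟨(i, j), h⟩ : P n) = genMat n i j := by
    have h' : i < j := h
    simp [genMat, h']
  rw [hX]
  have h1 : ((genMat n).map (piHom n g⁻¹)).map (piHom n g) = genMat n := by
    rw [piHom_map_genMat, Matrix.map_mul, Matrix.map_mul, Matrix.transpose_map,
      map_alg_map, piHom_map_genMat, inv_inv]
    have e : (g : Matrix (Fin n) (Fin n) ℂ).map (algebraMap ℂ (P n)) *
        ((g⁻¹ : GL (Fin n) ℂ) : Matrix (Fin n) (Fin n) ℂ).map (algebraMap ℂ (P n)) = 1 := by
      rw [← Matrix.map_mul, ← Units.val_mul, mul_inv_cancel, Units.val_one,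
        Matrix.map_one _ (map_zero _) (map_one _)]
    exact conj_cancel _ _ _ e
  have h2 := congrFun (congrFun h1 i) j
  rw [Matrix.map_apply, Matrix.map_apply] at h2
  rw [AlgHom.comp_apply, h2, AlgHom.id_apply]

lemma piHom_inv_apply (n : ℕ) (g : GL (Fin n) ℂ) (p : P n) :
    piHom n g (piHom n g⁻¹ p) = p :=
  congrArg (fun f => f p) (piHom_comp_inv n g)

/-- conjugation by `π(g)`. -/
def cj (n : ℕ) (g : GL (Fin n) ℂ) : Module.End ℂ (P n) →ₐ[ℂ] Module.End ℂ (P n) :=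
  AlgHom.ofLinearMap
    { toFun := fun T => (piHom n g).toLinearMap ∘ₗ T ∘ₗ (piHom n g⁻¹).toLinearMap
      map_add' := fun S T => by
        refine LinearMap.ext fun p => ?_
        simp
      map_smul' := fun c T => by
        refine LinearMap.ext fun p => ?_
        simp }
    (by
      refine LinearMap.ext fun p => ?_
      exact piHom_inv_apply n g p)
    (by
      intro S T
      refine LinearMap.ext fun p => ?_
      have h := piHom_inv_apply n g⁻¹ (T (piHom n g⁻¹ p))
      rw [inv_inv] at h
      change piHom n g (S (T (piHom n g⁻¹ p))) =
        piHom n g (S (piHom n g⁻¹ (piHom n g (T (piHom n g⁻¹ p)))))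
      rw [h])

lemma cj_apply (n : ℕ) (g : GL (Fin n) ℂ) (T : Module.End ℂ (P n)) :
    cj n g T = (piHom n g).toLinearMap ∘ₗ T ∘ₗ (piHom n g⁻¹).toLinearMap := by
  refine LinearMap.ext fun p => ?_
  rfl

lemma cj_apply_apply (n : ℕ) (g : GL (Fin n) ℂ) (T : Module.End ℂ (P n)) (p : P n) :
    cj n g T p = piHom n g (T (piHom n g⁻¹ p)) := by
  rfl

/-- The derivation underlying `Dop`. -/
def Dder (n : ℕ) (i j : Fin n) : Derivation ℂ (P n) (P n) :=
  if h : i < j then pderiv ⟨(i, j), h⟩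
  else if h' : j < i then -pderiv ⟨(j, i), h'⟩
  else 0

lemma Dop_eq (n : ℕ) (i j : Fin n) : Dop n i j = (Dder n i j : P n →ₗ[ℂ] P n) := by
  unfold Dop Dder
  split_ifs <;> rfl

lemma Dder_gen (n : ℕ) (i j a b : Fin n) : Dder n i j (genMat n a b) =
    algebraMap ℂ (P n) ((if i = a then 1 else 0) * (if j = b then 1 else 0)
      - (if i = b then 1 else 0) * (if j = a then 1 else 0)) := by
  have hX : ∀ p q : Idx n, (pderiv p) (X q : P n) = if p = q then 1 else 0 := by
    intro p q
    rw [pderiv_X, Pi.single_apply]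
    simp only [eq_comm]
  unfold Dder genMat
  simp only [Matrix.of_apply]
  by_cases h1 : i < j <;> by_cases h2 : j < i <;> by_cases h3 : a < b <;> by_cases h4 : b < a <;>
    simp only [h1, h2, h3, h4, dif_pos, dif_neg, not_false_eq_true, Derivation.neg_apply, map_neg,
      hX, map_zero, Derivation.zero_apply, Subtype.mk.injEq, Prod.mk.injEq] <;>
    by_cases h5 : i = a <;> by_cases h6 : j = b <;> by_cases h7 : i = b <;>
    by_cases h8 : j = a <;> first | (exfalso; omega) | simp [h5, h6, h7, h8]
  all_goals
    by_cases hab : a = b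
    · first | (exfalso; omega) | simp [hab]
    · first | (exfalso; omega) | simp [hab, Ne.symm hab]

lemma Dder_sum_apply (n : ℕ) (c : Fin n → Fin n → ℂ) (p : P n) :
    (∑ k, ∑ l, c k l • Dder n k l) p = ∑ k, ∑ l, c k l • Dder n k l p := by
  let ev : Derivation ℂ (P n) (P n) →+ P n :=
    { toFun := fun d => d p
      map_zero' := rfl
      map_add' := fun _ _ => rfl }
  change ev _ = _
  simp only [map_sum]
  rfl

lemma cj_Dop (n : ℕ) (g : GL (Fin n) ℂ) (i j : Fin n) :
    cj n g (Dop n i j) = ∑ k, ∑ l, ((g : Matrix (Fin n) (Fin n) ℂ) k i *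
      (g : Matrix (Fin n) (Fin n) ℂ) l j) • Dop n k l := by
  let D1 : Derivation ℂ (P n) (P n) := Derivation.mk' (cj n g (Dop n i j)) (by
    intro a b
    simp only [cj_apply_apply, Dop_eq, Derivation.coeFn_coe, map_mul, Derivation.leibniz,
      smul_eq_mul, map_add, piHom_inv_apply])
  let D2 : Derivation ℂ (P n) (P n) := ∑ k, ∑ l, ((g : Matrix (Fin n) (Fin n) ℂ) k i *
      (g : Matrix (Fin n) (Fin n) ℂ) l j) • Dder n k l
  have h12 : D1 = D2 := by
    apply MvPolynomial.derivation_ext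
    rintro ⟨⟨a, b⟩, h⟩
    have hX : (X ⟨(a, b), h⟩ : P n) = genMat n a b := by
      have h' : a < b := h
      simp [genMat, h']
    rw [hX]
    have e1 : D1 (genMat n a b) = piHom n g (Dder n i j (piHom n g⁻¹ (genMat n a b))) := by
      change cj n g (Dop n i j) (genMat n a b) = _
      rw [cj_apply_apply, Dop_eq]; rfl
    have e2 : D2 (genMat n a b) = ∑ k, ∑ l, ((g : Matrix (Fin n) (Fin n) ℂ) k i *
      (g : Matrix (Fin n) (Fin n) ℂ) l j) • Dder n k l (genMat n a b) := by
      exact Dder_sum_apply n _ _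
    have e3 : piHom n g⁻¹ (genMat n a b) = ∑ l, ∑ k, ((g : Matrix (Fin n) (Fin n) ℂ) a k *
      (g : Matrix (Fin n) (Fin n) ℂ) b l) • genMat n k l := by
      rw [piHom_genMat, inv_inv]
      simp only [Matrix.mul_apply, Matrix.transpose_apply, Matrix.map_apply, Finset.sum_mul,
        Algebra.smul_def, map_mul]
      refine Finset.sum_congr rfl fun l _ => Finset.sum_congr rfl fun k _ => ?_
      ring
    rw [e1, e2, e3]
    simp only [map_sum, Derivation.map_smul, map_smul, Dder_gen, AlgHom.commutes]
    simp only [Algebra.smul_def, ← map_mul, ← map_sum]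
    congr 1
    simp [mul_sub, Finset.sum_sub_distrib, Finset.sum_ite_eq, mul_ite, ite_mul]
    ring
  have := congrArg (fun d : Derivation ℂ (P n) (P n) => (d : P n →ₗ[ℂ] P n)) h12
  have e : (D1 : P n →ₗ[ℂ] P n) = cj n g (Dop n i j) := rfl
  rw [← e]
  refine this.trans ?_
  refine LinearMap.ext fun p => ?_
  refine (Dder_sum_apply n _ p).trans ?_
  simp only [Dop_eq, LinearMap.sum_apply, LinearMap.smul_apply, Derivation.coeFn_coe]

lemma cj_Mop (n : ℕ) (g : GL (Fin n) ℂ) (i j : Fin n) :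
    cj n g (Mop n i j) = ∑ k, ∑ l, (((g⁻¹ : GL (Fin n) ℂ) : Matrix (Fin n) (Fin n) ℂ) i k *
      ((g⁻¹ : GL (Fin n) ℂ) : Matrix (Fin n) (Fin n) ℂ) j l) • Mop n k l := by
  refine LinearMap.ext fun p => ?_
  rw [cj_apply_apply]
  simp only [Mop_eq, LinearMap.mulLeft_apply, map_mul, piHom_inv_apply, LinearMap.sum_apply,
    LinearMap.smul_apply, piHom_genMat]
  simp only [Matrix.mul_apply, Matrix.transpose_apply, Matrix.map_apply, Finset.sum_mul,
        Algebra.smul_def, map_mul]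
  rw [Finset.sum_comm]
  refine Finset.sum_congr rfl fun l _ => Finset.sum_congr rfl fun k _ => ?_
  ring

lemma J_mul_J (A : Type*) [Semiring A] (n : ℕ) : Jmat A n * Jmat A n = 1 := by
  ext1 i j
  have key : ∀ k : Fin n, ((i : ℕ) + (k : ℕ) = n - 1) ↔ k = Fin.rev i := by
    intro k
    rw [Fin.ext_iff, Fin.val_rev]
    omega
  simp only [Matrix.mul_apply, Jmat, Matrix.of_apply, key, ite_mul, one_mul, zero_mul,
    Finset.sum_ite_eq', Finset.sum_ite_eq, Finset.mem_univ, if_true, Matrix.one_apply]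
  simp only [Fin.val_rev, Fin.ext_iff]
  congr 1
  apply propext
  omega

lemma J_map {A B : Type*} [Semiring A] [Semiring B] (f : A →+* B) (n : ℕ) :
    (Jmat A n).map f = Jmat B n := by
  ext1 i j
  simp only [Jmat, Matrix.map_apply, Matrix.of_apply]
  split_ifs <;> simp

/-- `Ad_{π(g)}(Φ(u)) = ι(ᵗg) Φ(u) ι(ᵗg)⁻¹`. -/
theorem Ad_Phi (n : ℕ) (hn : 1 ≤ n) (g : GL (Fin n) ℂ) (u : ℂ) :
    (Matrix.of fun p q : Fin n ⊕ Fin n =>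
        (piHom n g).toLinearMap ∘ₗ Phi n u p q ∘ₗ (piHom n g⁻¹).toLinearMap) =
      (iota n (g : Matrix (Fin n) (Fin n) ℂ)ᵀ).map (algebraMap ℂ (Module.End ℂ (P n))) *
        Phi n u *
        ((iota n (g : Matrix (Fin n) (Fin n) ℂ)ᵀ)⁻¹).map (algebraMap ℂ (Module.End ℂ (P n))) := by
  have hL : (Matrix.of fun p q : Fin n ⊕ Fin n =>
        (piHom n g).toLinearMap ∘ₗ Phi n u p q ∘ₗ (piHom n g⁻¹).toLinearMap) =
      (Phi n u).map (cj n g) := by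
    ext1 p q
    rw [Matrix.map_apply, cj_apply]; rfl
  rw [hL]
  set G : Matrix (Fin n) (Fin n) ℂ := (g : Matrix (Fin n) (Fin n) ℂ) with hG
  set H : Matrix (Fin n) (Fin n) ℂ := ((g⁻¹ : GL (Fin n) ℂ) : Matrix (Fin n) (Fin n) ℂ) with hH
  have hGH : G * H = 1 := by rw [hG, hH, ← Units.val_mul, mul_inv_cancel, Units.val_one]
  have hHG : H * G = 1 := by rw [hG, hH, ← Units.val_mul, inv_mul_cancel, Units.val_one]
  have hGi : G⁻¹ = H := Matrix.inv_eq_right_inv hGH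
  have hJ := J_mul_J ℂ n
  have hiota : iota n Gᵀ = fromBlocks Gᵀ 0 0 (Jmat ℂ n * H * Jmat ℂ n) := by
    rw [iota, Matrix.transpose_transpose, hGi]
  have hcancel : Jmat ℂ n * H * Jmat ℂ n * (Jmat ℂ n * G * Jmat ℂ n) = 1 := by
    calc Jmat ℂ n * H * Jmat ℂ n * (Jmat ℂ n * G * Jmat ℂ n)
        = Jmat ℂ n * (H * (Jmat ℂ n * Jmat ℂ n) * G) * Jmat ℂ n := by
          simp only [Matrix.mul_assoc]
      _ = 1 := by rw [hJ, Matrix.mul_one, hHG, Matrix.mul_one, hJ]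
  have hiotainv : (iota n Gᵀ)⁻¹ = fromBlocks Hᵀ 0 0 (Jmat ℂ n * G * Jmat ℂ n) := by
    apply Matrix.inv_eq_right_inv
    rw [hiota, Matrix.fromBlocks_multiply]
    simp only [Matrix.mul_zero, Matrix.zero_mul, add_zero, zero_add]
    rw [hcancel, ← Matrix.transpose_mul, hHG, Matrix.transpose_one, Matrix.fromBlocks_one]
  rw [hiotainv, hiota]
  let α : ℂ →+* (Module.End ℂ (P n)) := algebraMap ℂ (Module.End ℂ (P n))
  let DD : Matrix (Fin n) (Fin n) (Module.End ℂ (P n)) := Matrix.of fun i j => Dop n i j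
  let MM : Matrix (Fin n) (Fin n) (Module.End ℂ (P n)) := Matrix.of fun i j => Mop n i j
  have hDD : DD.map (cj n g) = Gᵀ.map α * DD * G.map α := by
    ext1 i j
    rw [Matrix.map_apply]
    refine (cj_Dop n g i j).trans ?_
    simp only [Matrix.mul_apply, Finset.sum_mul, Matrix.map_apply, Matrix.transpose_apply]
    rw [Finset.sum_comm]
    refine Finset.sum_congr rfl fun l _ => Finset.sum_congr rfl fun k _ => ?_
    change _ = α (G k i) * Dop n k l * α (G l j)
    rw [mul_assoc, ← Algebra.commutes (G l j) (Dop n k l), ← mul_assoc, ← map_mul,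
      ← Algebra.smul_def]
  have hMM : MM.map (cj n g) = H.map α * MM * Hᵀ.map α := by
    ext1 i j
    rw [Matrix.map_apply]
    refine (cj_Mop n g i j).trans ?_
    simp only [Matrix.mul_apply, Finset.sum_mul, Matrix.map_apply, Matrix.transpose_apply]
    rw [Finset.sum_comm]
    refine Finset.sum_congr rfl fun l _ => Finset.sum_congr rfl fun k _ => ?_
    change _ = α (H i k) * Mop n k l * α (H j l)
    rw [mul_assoc, ← Algebra.commutes (H j l) (Mop n k l), ← mul_assoc, ← map_mul,
      ← Algebra.smul_def]
  have hJE := J_mul_J (Module.End ℂ (P n)) n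
  have hJα : (Jmat ℂ n).map α = Jmat (Module.End ℂ (P n)) n := J_map α n
  have hJc : (Jmat (Module.End ℂ (P n)) n).map (cj n g) = Jmat (Module.End ℂ (P n)) n := J_map (cj n g).toRingHom n
  have hPhi : Phi n u = fromBlocks (u • 1) (DD * Jmat (Module.End ℂ (P n)) n) (-(Jmat (Module.End ℂ (P n)) n * MM)) (-(u • 1)) := rfl
  have hu : (u • (1 : Matrix (Fin n) (Fin n) (Module.End ℂ (P n)))).map (cj n g) = u • 1 := by
    ext1 i j
    simp only [Matrix.map_apply, Matrix.smul_apply, map_smul, Matrix.one_apply]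
    split_ifs <;> simp
  have hneg : ∀ A : Matrix (Fin n) (Fin n) (Module.End ℂ (P n)), (-A).map (cj n g) = -(A.map (cj n g)) := by
    intro A; ext1 i j; simp
  have h0 : (0 : Matrix (Fin n) (Fin n) ℂ).map α = 0 := Matrix.map_zero _ (map_zero α)
  have hGH' : ∀ A B : Matrix (Fin n) (Fin n) ℂ, A * B = 1 → A.map α * B.map α = 1 := by
    intro A B h
    rw [← Matrix.map_mul, h, Matrix.map_one _ (map_zero α) (map_one α)]
  rw [hPhi, Matrix.fromBlocks_map, hneg, hneg, hu, Matrix.map_mul, Matrix.map_mul, hDD, hMM, hJc]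
  change _ = (fromBlocks Gᵀ 0 0 (Jmat ℂ n * H * Jmat ℂ n)).map α * _ *
    (fromBlocks Hᵀ 0 0 (Jmat ℂ n * G * Jmat ℂ n)).map α
  rw [Matrix.fromBlocks_map, Matrix.fromBlocks_map, Matrix.fromBlocks_multiply,
    Matrix.fromBlocks_multiply]
  simp only [h0, Matrix.mul_zero, Matrix.zero_mul, add_zero, zero_add]
  congr 1
  · rw [Matrix.mul_smul, Matrix.mul_one, Matrix.smul_mul, hGH']
    rw [← Matrix.transpose_mul, hHG, Matrix.transpose_one]
  · simp only [Matrix.map_mul, hJα]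
    calc Gᵀ.map α * DD * G.map α * Jmat (Module.End ℂ (P n)) n
        = Gᵀ.map α * DD * 1 * G.map α * Jmat (Module.End ℂ (P n)) n := by rw [Matrix.mul_one]
      _ = _ := by rw [← hJE]; simp only [Matrix.mul_assoc]
  · simp only [Matrix.map_mul, hJα, Matrix.mul_neg, Matrix.neg_mul]
    congr 1
    calc Jmat (Module.End ℂ (P n)) n * (H.map α * MM * Hᵀ.map α)
        = Jmat (Module.End ℂ (P n)) n * H.map α * 1 * MM * Hᵀ.map α := by
          rw [Matrix.mul_one]; simp only [Matrix.mul_assoc]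
      _ = _ := by rw [← hJE]; simp only [Matrix.mul_assoc]
  · rw [Matrix.mul_neg, Matrix.neg_mul, Matrix.mul_smul, Matrix.mul_one, Matrix.smul_mul,
      hGH' _ _ hcancel]

end
end

section
/- Let 𝒜 be an associative unital algebra over a field of characteristic 0 (e.g. a ℚ-algebra), and let A, B ∈ 𝒜 be elements such that the commutator [A,B] := AB − BA commutes with both A and B, i.e. [A,[A,B]] = 0 and [B,[A,B]] = 0. Then for every nonnegative integer m, (A + B)^m = Σ_{k=0}^{⌊m/2⌋} ( m! / (2^k k! (m−2k)!) ) [A,B]^k Σ_{s=0}^{m−2k} C(m−2k, s) B^s A^{m−2k−s}, where C(·,·) is the binomial coefficient. -/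
noncomputable section

/-- Normally ordered powers. -/
def nordPow {R : Type*} [Ring R] (A B : R) : ℕ → R
  | 0 => 1
  | n + 1 => B * nordPow A B n + nordPow A B n * A

theorem nordPow_eq {R : Type*} [Ring R] (A B : R) (n : ℕ) :
    nordPow A B n = ∑ s ∈ Finset.range (n + 1), (n.choose s) • (B ^ s * A ^ (n - s)) := by
  induction n with
  | zero => simp [nordPow]
  | succ n ih =>
    rw [nordPow, ih, Finset.sum_range_succ' _ (n + 1)]
    have h1 : ∀ s ∈ Finset.range (n + 1),
        ((n + 1).choose (s + 1)) • (B ^ (s + 1) * A ^ (n + 1 - (s + 1))) =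
        B * ((n.choose s) • (B ^ s * A ^ (n - s))) +
          (n.choose (s + 1)) • (B ^ (s + 1) * A ^ (n - s)) := by
      intro s _
      rw [Nat.choose_succ_succ, add_smul, Nat.add_sub_add_right, mul_smul_comm, ← mul_assoc,
        ← pow_succ']
    rw [Finset.sum_congr rfl h1, Finset.sum_add_distrib, ← Finset.mul_sum, add_assoc]
    congr 1
    rw [Finset.sum_range_succ (fun s => (n.choose (s + 1)) • (B ^ (s + 1) * A ^ (n - s))),
      Finset.sum_range_succ' _ n, add_mul, Finset.sum_mul]
    simp only [Nat.choose_succ_self, zero_smul, add_zero, Nat.choose_zero_right, one_smul,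
      pow_zero, one_mul, Nat.sub_zero, pow_succ A n]
    congr 1
    apply Finset.sum_congr rfl
    intro s hs
    have hs' := Finset.mem_range.1 hs
    rw [smul_mul_assoc, mul_assoc, ← pow_succ, show n - (s + 1) + 1 = n - s by omega]

theorem nordPow_comm {R : Type*} [Ring R] (A B C : R) (hC : A * B = B * A + C)
    (hA : A * C = C * A) (hB : B * C = C * B) (n : ℕ) :
    A * nordPow A B n = nordPow A B n * A + n • (C * nordPow A B (n - 1)) := by
  induction n with
  | zero => simp [nordPow]
  | succ n ih =>
    have e : A * nordPow A B (n + 1) = B * (A * nordPow A B n) + C * nordPow A B n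
        + (A * nordPow A B n) * A := by
      rw [nordPow, mul_add, ← mul_assoc, hC, add_mul]; simp only [mul_assoc]
    rw [e, ih, Nat.add_sub_cancel]
    rcases n with _ | n
    · simp [nordPow, add_mul]; abel
    · have h2 : (n + 1 + 1) • (C * nordPow A B (n + 1)) = C * nordPow A B (n + 1)
          + (n + 1) • (B * (C * nordPow A B n) + (C * nordPow A B n) * A) := by
        rw [succ_nsmul', ← mul_assoc B, hB, mul_assoc C, mul_assoc C, ← mul_add, ← nordPow]
      rw [h2, Nat.add_sub_cancel, nordPow.eq_2 A B (n + 1)]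
      simp only [mul_add, add_mul, smul_add, mul_smul_comm, smul_mul_assoc, mul_assoc]
      abel

/-- Coefficients. -/
def nordCoef (K : Type*) [Field K] (m k : ℕ) : K :=
  if 2 * k ≤ m then
    (m.factorial : K) / ((2 : K) ^ k * (k.factorial : K) * ((m - 2 * k).factorial : K)) else 0

theorem nordCoef_zero (K : Type*) [Field K] [CharZero K] (m : ℕ) : nordCoef K m 0 = 1 := by
  have : (m.factorial : K) ≠ 0 := by exact_mod_cast m.factorial_ne_zero
  simp [nordCoef, this]

theorem nordCoef_succ (K : Type*) [Field K] [CharZero K] (m k : ℕ) :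
    nordCoef K (m + 1) (k + 1) =
      nordCoef K m (k + 1) + ((m - 2 * k : ℕ) : K) * nordCoef K m k := by
  have hf : ∀ n : ℕ, (n.factorial : K) ≠ 0 := fun n => by exact_mod_cast n.factorial_ne_zero
  have hk1 : (k : K) + 1 ≠ 0 := by exact_mod_cast k.succ_ne_zero
  have hk := hf k
  unfold nordCoef
  rcases lt_trichotomy m (2 * k + 1) with h | h | h
  · rw [if_neg (by omega), if_neg (by omega), show m - 2 * k = 0 by omega]; simp
  · subst h
    have := hf (2 * k + 1)
    rw [if_pos (by omega), if_neg (by omega), if_pos (by omega),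
      show 2 * k + 1 + 1 - 2 * (k + 1) = 0 by omega, show 2 * k + 1 - 2 * k = 1 by omega,
      Nat.factorial_succ (2 * k + 1), Nat.factorial_succ k]
    push_cast
    simp only [Nat.factorial_zero, Nat.factorial_one]
    field_simp
    push_cast
    ring
  · obtain ⟨r, rfl⟩ : ∃ r, m = 2 * k + 2 + r := ⟨m - (2 * k + 2), by omega⟩
    rw [if_pos (by omega), if_pos (by omega), if_pos (by omega),
      show 2 * k + 2 + r + 1 - 2 * (k + 1) = r + 1 by omega,
      show 2 * k + 2 + r - 2 * (k + 1) = r by omega,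
      show 2 * k + 2 + r - 2 * k = r + 1 + 1 by omega,
      Nat.factorial_succ (2 * k + 2 + r), Nat.factorial_succ k, Nat.factorial_succ (r + 1),
      Nat.factorial_succ r]
    have h1 := hf r
    have h2 : (r : K) + 1 ≠ 0 := by exact_mod_cast r.succ_ne_zero
    have h3 : (r : K) + 1 + 1 ≠ 0 := by exact_mod_cast (r + 1).succ_ne_zero
    have h4 := hf (2 * k + 2 + r)
    push_cast
    field_simp
    ring

theorem nord_aux {K : Type*} [Field K] [CharZero K]
    {R : Type*} [Ring R] [Algebra K R] (A B C : R) (hC : A * B = B * A + C)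
    (hA : A * C = C * A) (hB : B * C = C * B) (m : ℕ) :
    (A + B) ^ m = ∑ k ∈ Finset.range (m + 1),
      nordCoef K m k • (C ^ k * nordPow A B (m - 2 * k)) := by
  induction m with
  | zero => simp [nordCoef_zero, nordPow]
  | succ m ih =>
    have hS : Commute (A + B) C := by
      show (A + B) * C = C * (A + B)
      rw [add_mul, mul_add, hA, hB]
    have key : ∀ k, (A + B) * (nordCoef K m k • (C ^ k * nordPow A B (m - 2 * k))) =
        nordCoef K m k • (C ^ k * nordPow A B (m + 1 - 2 * k)) +
        (((m - 2 * k : ℕ) : K) * nordCoef K m k) •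
          (C ^ (k + 1) * nordPow A B (m + 1 - 2 * (k + 1))) := by
      intro k
      by_cases h : 2 * k ≤ m
      · rw [mul_smul_comm, ← mul_assoc, (hS.pow_right k).eq, mul_assoc, add_mul,
          nordPow_comm A B C hC hA hB, show m + 1 - 2 * k = (m - 2 * k) + 1 by omega,
          show m + 1 - 2 * (k + 1) = m - 2 * k - 1 by omega, nordPow, mul_comm (_ : K), mul_smul,
          ← smul_add, Nat.cast_smul_eq_nsmul, pow_succ, mul_assoc (C ^ k), ← mul_smul_comm (m - 2 * k) (C ^ k),
          ← mul_add]
        congr 2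
        abel
      · simp [nordCoef, h]
    rw [pow_succ', ih, Finset.mul_sum, Finset.sum_congr rfl (fun k _ => key k),
      Finset.sum_add_distrib, Finset.sum_range_succ' _ (m + 1)]
    simp only [nordCoef_succ, add_smul]
    rw [Finset.sum_add_distrib, add_right_comm]
    congr 1
    rw [nordCoef_zero, ← nordCoef_zero K m,
      ← Finset.sum_range_succ' (fun k => nordCoef K m k • (C ^ k * nordPow A B (m + 1 - 2 * k))),
      Finset.sum_range_succ _ (m + 1)]
    have : nordCoef K m (m + 1) = 0 := if_neg (by omega)
    simp [this]

/-- Binomial-type expansion of `(A + B)^m` when the commutator `[A,B]` commutes with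
both `A` and `B`, over a field of characteristic zero. -/
theorem add_pow_of_commutator_central {K : Type*} [Field K] [CharZero K]
    {𝒜 : Type*} [Ring 𝒜] [Algebra K 𝒜] (A B : 𝒜)
    (hA : A * (A * B - B * A) = (A * B - B * A) * A)
    (hB : B * (A * B - B * A) = (A * B - B * A) * B) (m : ℕ) :
    (A + B) ^ m =
      ∑ k ∈ Finset.range (m / 2 + 1),
        ((m.factorial : K) /
            ((2 : K) ^ k * (k.factorial : K) * ((m - 2 * k).factorial : K))) •
          ((A * B - B * A) ^ k *
            ∑ s ∈ Finset.range (m - 2 * k + 1),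
              ((m - 2 * k).choose s) • (B ^ s * A ^ (m - 2 * k - s))) := by
  rw [nord_aux (K := K) A B (A * B - B * A) (by abel) hA hB m]
  symm
  apply Finset.sum_subset_zero_on_sdiff
  · intro k hk
    simp only [Finset.mem_range] at hk ⊢
    omega
  · intro k hk
    simp only [Finset.mem_sdiff, Finset.mem_range] at hk
    rw [nordCoef, if_neg (by omega), zero_smul]
  · intro k hk
    simp only [Finset.mem_range] at hk
    rw [nordCoef, if_pos (by omega), nordPow_eq]

end
end
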